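/- Let □̂_q^even (resp. □̂_q^odd) denote the subalgebra of □̂_q generated by x₀, x₂ (resp. x₁, x₃), and let Ĉ denote the subalgebra of □̂_q generated by the c_i^{±1} (i ∈ ℤ/4ℤ). Let L = F[λ₀^{±1}, λ₁^{±1}, λ₂^{±1}, λ₃^{±1}] denote the Laurent polynomial algebra in four commuting variables over F. Then (i) there exists an F-algebra isomorphism L → Ĉ sending λ_i^{±1} ↦ c_i^{±1} for i ∈ ℤ/4ℤ, and (ii) the multiplication map □̂_q^even ⊗ □̂_q^odd ⊗ Ĉ → □̂_q, u ⊗ v ⊗ c ↦ uvc, is an isomorphism of F-vector spaces. -/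

import Mathlib

/-!
Let `N` (`UPos` below) be the algebra on two generators with the two cubic `q`-Serre relations, and
`L` (`Laurent`) the Laurent
polynomial algebra in four variables. The even and odd subalgebras are images of `N`, and `Ĉ` is an
image of `L`, so there is a linear map `N ⊗ N ⊗ L → □̂_q`, `n ⊗ m ⊗ l ↦ f(n) g(m) h(l)`. Both parts of
the theorem follow once this map is shown to be bijective.

Surjectivity (`mulMap3_surjective`) is straightening: the `q`-Weyl relations move `x₁, x₃` to the
right past `x₀, x₂`, producing only central terms.

Injectivity comes from a representation of `□̂_q` on `N ⊗ B` with `B = N ⊗ L` (`exists_rep`).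
Here `x₀, x₂` act by left multiplication on `N`, the `c_i` by multiplication by `λ_i`, and
`x₁ = σ ⊗ y₁ + ∂ ⊗ λ₀ + ∂' ⊗ λ₁`, where `y₁` is left multiplication by a generator of the second
copy of `N`, `σ` is the automorphism of `N` scaling the generators by `q²` and `q⁻²`, and `∂, ∂'` are
`σ`-derivations; `x₃` is similar with `σ⁻¹`, `λ₃`, `λ₂`. The automorphism and the derivations exist
because the Serre relations lift to upper triangular `2 × 2` matrices (`qSerre_mat`, `exists_skew`).
The Weyl relations hold by construction. The Serre expression in `x₁, x₃` commutes up to a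
scalar with `x₀` and `x₂` (`qSerre_comm`) and kills `1 ⊗ B`, hence vanishes on
`N ⊗ B`. Finally `f(n) g(m) h(l)` sends `1 ⊗ 1` to `n ⊗ (m ⊗ l)`, so evaluation at `1 ⊗ 1` is a left
inverse (`exists_leftInverse`).
-/

noncomputable section

/-- The `q`-Serre expression `u³v − [3]_q u²vu + [3]_q uvu² − vu³`,
where `[3]_q = (q³ − q⁻³)/(q − q⁻¹)`. -/
def qSerre {F : Type*} [Field F] (q : F) {A : Type*} [Ring A] [Algebra F A] (u v : A) : A :=
  u ^ 3 * v - ((q ^ 3 - q⁻¹ ^ 3) / (q - q⁻¹)) • (u ^ 2 * v * u)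
    + ((q ^ 3 - q⁻¹ ^ 3) / (q - q⁻¹)) • (u * v * u ^ 2) - v * u ^ 3
/-- Generator indices for `□̂_q`: `Sum.inl i` is `x_i`, `Sum.inr (Sum.inl i)` is `c_i`,
and `Sum.inr (Sum.inr i)` is `c_i⁻¹`. -/
abbrev BHGen := (ZMod 4) ⊕ ((ZMod 4) ⊕ (ZMod 4))

/-- The free generator corresponding to `x_i`. -/
def bhx (F : Type*) [Field F] (i : ZMod 4) : FreeAlgebra F BHGen :=
  FreeAlgebra.ι F (Sum.inl i)

/-- The free generator corresponding to `c_i`. -/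
def bhc (F : Type*) [Field F] (i : ZMod 4) : FreeAlgebra F BHGen :=
  FreeAlgebra.ι F (Sum.inr (Sum.inl i))

/-- The free generator corresponding to `c_i⁻¹`. -/
def bhcinv (F : Type*) [Field F] (i : ZMod 4) : FreeAlgebra F BHGen :=
  FreeAlgebra.ι F (Sum.inr (Sum.inr i))

/-- The defining relations of the algebra `□̂_q`. -/
inductive BoxHRel (F : Type*) [Field F] (q : F) :
    FreeAlgebra F BHGen → FreeAlgebra F BHGen → Prop
  | c_cinv (i : ZMod 4) : BoxHRel F q (bhc F i * bhcinv F i) 1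
  | cinv_c (i : ZMod 4) : BoxHRel F q (bhcinv F i * bhc F i) 1
  | central_c (i : ZMod 4) (a : FreeAlgebra F BHGen) : BoxHRel F q (bhc F i * a) (a * bhc F i)
  | central_cinv (i : ZMod 4) (a : FreeAlgebra F BHGen) :
      BoxHRel F q (bhcinv F i * a) (a * bhcinv F i)
  | weyl (i : ZMod 4) : BoxHRel F q
      ((q - q⁻¹)⁻¹ • (q • (bhx F i * bhx F (i + 1)) - q⁻¹ • (bhx F (i + 1) * bhx F i)))
      (bhc F i)
  | serre (i : ZMod 4) : BoxHRel F q (qSerre q (bhx F i) (bhx F (i + 2))) 0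

/-- The algebra `□̂_q`. -/
abbrev BoxH (F : Type*) [Field F] (q : F) := RingQuot (BoxHRel F q)

/-- The generators `x_i` of `□̂_q`. -/
def xH (F : Type*) [Field F] (q : F) (i : ZMod 4) : BoxH F q :=
  RingQuot.mkAlgHom F (BoxHRel F q) (bhx F i)

/-- The central generators `c_i` of `□̂_q`. -/
def cH (F : Type*) [Field F] (q : F) (i : ZMod 4) : BoxH F q :=
  RingQuot.mkAlgHom F (BoxHRel F q) (bhc F i)

/-- The central generators `c_i⁻¹` of `□̂_q`. -/
def cinvH (F : Type*) [Field F] (q : F) (i : ZMod 4) : BoxH F q :=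
  RingQuot.mkAlgHom F (BoxHRel F q) (bhcinv F i)

open TensorProduct in
/-- The trilinear multiplication map `M ⊗ N ⊗ P → A`, `u ⊗ v ⊗ c ↦ uvc`. -/
def mulMap3 {F : Type*} [Field F] {A : Type*} [Ring A] [Algebra F A]
    (M N P : Submodule F A) : (M ⊗[F] N) ⊗[F] P →ₗ[F] A :=
  TensorProduct.lift
    (LinearMap.mk₂ F (fun t c => Submodule.mulMap M N t * (c : A))
      (fun t t' c => by simp only [map_add, add_mul])
      (fun s t c => by simp only [map_smul, smul_mul_assoc])
      (fun t c c' => by simp only [Submodule.coe_add, mul_add])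
      (fun s t c => by simp only [SetLike.val_smul, mul_smul_comm]))

/-! ### The algebra on two generators with the cubic `q`-Serre relations -/

/-- The relations of the algebra with two generators satisfying the `q`-Serre relations. -/
inductive UPosRel (F : Type*) [Field F] (q : F) :
    FreeAlgebra F Bool → FreeAlgebra F Bool → Prop
  | serre (b : Bool) : UPosRel F q (qSerre q (FreeAlgebra.ι F b) (FreeAlgebra.ι F (!b))) 0

/-- The algebra on two generators subject to the two cubic `q`-Serre relations (the positive part
of `U_q(ŝl₂)`). The generators are indexed by `Bool`; under the maps used below `false` and `true`
correspond to `x₀, x₂` respectively, or to `x₁, x₃`. -/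
def UPos (F : Type*) [Field F] (q : F) := RingQuot (UPosRel F q)

instance (F : Type*) [Field F] (q : F) : Ring (UPos F q) :=
  inferInstanceAs (Ring (RingQuot (UPosRel F q)))

instance (F : Type*) [Field F] (q : F) : Algebra F (UPos F q) :=
  inferInstanceAs (Algebra F (RingQuot (UPosRel F q)))

/-- The quotient map from the free algebra. -/
def uposMk (F : Type*) [Field F] (q : F) : FreeAlgebra F Bool →ₐ[F] UPos F q :=
  RingQuot.mkAlgHom F (UPosRel F q)

/-- The generators. -/
def uposGen (F : Type*) [Field F] (q : F) (b : Bool) : UPos F q :=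
  uposMk F q (FreeAlgebra.ι F b)

section general
variable {F : Type*} [Field F] {q : F}

lemma map_qSerre {A B : Type*} [Ring A] [Algebra F A] [Ring B] [Algebra F B] (f : A →ₐ[F] B)
    (u v : A) : f (qSerre q u v) = qSerre q (f u) (f v) := by
  simp [qSerre]

lemma upos_serre (b : Bool) : qSerre q (uposGen F q b) (uposGen F q (!b)) = 0 := by
  have h : uposMk F q (qSerre q (FreeAlgebra.ι F b) (FreeAlgebra.ι F (!b))) = uposMk F q 0 :=
    RingQuot.mkAlgHom_rel F (UPosRel.serre b)
  rw [map_qSerre, map_zero] at h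
  exact h

/-- The homomorphism determined by two elements satisfying the `q`-Serre relations. -/
def uposLift {A : Type*} [Ring A] [Algebra F A] (g : Bool → A)
    (hg : ∀ b, qSerre q (g b) (g (!b)) = 0) : UPos F q →ₐ[F] A :=
  RingQuot.liftAlgHom F ⟨FreeAlgebra.lift F g, by
    rintro _ _ ⟨b⟩
    rw [map_qSerre, map_zero, FreeAlgebra.lift_ι_apply, FreeAlgebra.lift_ι_apply, hg]⟩

lemma uposLift_gen {A : Type*} [Ring A] [Algebra F A] (g : Bool → A)
    (hg : ∀ b, qSerre q (g b) (g (!b)) = 0) (b : Bool) :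
    uposLift g hg (uposGen F q b) = g b := by
  exact (RingQuot.liftAlgHom_mkAlgHom_apply F _ _ _).trans (by simp)

lemma upos_induction {P : UPos F q → Prop} (halg : ∀ r : F, P (algebraMap F _ r))
    (hgen : ∀ b, P (uposGen F q b)) (hmul : ∀ a b, P a → P b → P (a * b))
    (hadd : ∀ a b, P a → P b → P (a + b)) (n : UPos F q) : P n := by
  obtain ⟨a, rfl⟩ : ∃ a, uposMk F q a = n := RingQuot.mkAlgHom_surjective F (UPosRel F q) n
  induction a using FreeAlgebra.induction with
  | grade0 r => rw [AlgHom.commutes]; exact halg r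
  | grade1 x => exact hgen x
  | mul a b ha hb => rw [map_mul]; exact hmul _ _ ha hb
  | add a b ha hb => rw [map_add]; exact hadd _ _ ha hb

lemma sub_inv_ne (hq : q ≠ 0) (hq2 : q ^ 2 ≠ 1) : q - q⁻¹ ≠ 0 := by
  intro h
  apply hq2
  have : q * (q - q⁻¹) = 0 := by rw [h, mul_zero]
  rw [mul_sub, mul_inv_cancel₀ hq] at this
  linear_combination this

lemma qthree (hq : q ≠ 0) (hq2 : q ^ 2 ≠ 1) :
    (q ^ 3 - q⁻¹ ^ 3) / (q - q⁻¹) = q ^ 2 + 1 + (q ^ 2)⁻¹ := by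
  rw [div_eq_iff (sub_inv_ne hq hq2)]
  field_simp
  ring

/-- The `q`-Serre expression in terms of a parameter `p` which may be `q ^ 2` or `(q ^ 2)⁻¹`: the
coefficient `[3]_q` is symmetric under `q ↦ q⁻¹`, and both choices are needed below. -/
lemma qSerre_eq {A : Type*} [Ring A] [Algebra F A] {p : F}
    (hp : (q ^ 3 - q⁻¹ ^ 3) / (q - q⁻¹) = p + 1 + p⁻¹) (u v : A) :
    qSerre q u v = u * (u * (u * v)) - (p + 1 + p⁻¹) • (u * (u * (v * u)))
      + (p + 1 + p⁻¹) • (u * (v * (u * u))) - v * (u * (u * u)) := by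
  rw [qSerre, hp]
  simp only [pow_succ, pow_zero, one_mul, mul_assoc]

/-- The `q`-Serre relation survives the passage from `u, v` to upper triangular matrices
whose corner entries are arbitrary scalars. This is what makes the skew derivations of
`exists_skew` well defined. -/
lemma qSerre_mat {A : Type*} [Ring A] [Algebra F A] {p : F} (hp0 : p ≠ 0)
    (hp : (q ^ 3 - q⁻¹ ^ 3) / (q - q⁻¹) = p + 1 + p⁻¹) (u v : A) (huv : qSerre q u v = 0)
    (a b : F) :
    qSerre q (!![p • u, a • 1; 0, u]) (!![p⁻¹ • v, b • 1; 0, v]) = 0 := by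
  rw [qSerre_eq hp] at huv ⊢
  simp only [Matrix.mul_fin_two]
  have h2 : p ^ 2 • (u * (u * (u * v)) - (p + 1 + p⁻¹) • (u * (u * (v * u)))
      + (p + 1 + p⁻¹) • (u * (v * (u * u))) - v * (u * (u * u))) = 0 := by rw [huv, smul_zero]
  ext i j
  fin_cases i <;> fin_cases j
  · simp
    rw [← h2]
    match_scalars <;> field_simp
  · simp [mul_add]
    match_scalars <;> field_simp <;> ring
  · simp
  · simp
    rw [← huv]

/-- Suppose `X` and `Y` commute with `Z` up to the factors `p`, `p⁻¹` and error terms `c`, `d`;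
when these commute with `X` and `Y` as indicated, they cancel in the commutation of the
`q`-Serre expression with `Z`. -/
lemma qSerre_comm {A : Type*} [Ring A] [Algebra F A] {p : F} (hp0 : p ≠ 0)
    (hp : (q ^ 3 - q⁻¹ ^ 3) / (q - q⁻¹) = p + 1 + p⁻¹) {X Y Z c d : A}
    (hX : X * Z = p • (Z * X) + c) (hY : Y * Z = p⁻¹ • (Z * Y) + d)
    (hcX : X * c = c * X) (hcY : Y * c = c * Y) (hdX : X * d = d * X) :
    qSerre q X Y * Z = p ^ 2 • (Z * qSerre q X Y) := by
  have hX' (w : A) : X * (Z * w) = p • (Z * (X * w)) + c * w := by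
    rw [← mul_assoc, hX, add_mul, smul_mul_assoc, mul_assoc]
  have hY' (w : A) : Y * (Z * w) = p⁻¹ • (Z * (Y * w)) + d * w := by
    rw [← mul_assoc, hY, add_mul, smul_mul_assoc, mul_assoc]
  have hcX' (w : A) : X * (c * w) = c * (X * w) := by rw [← mul_assoc, hcX, mul_assoc]
  have hcY' (w : A) : Y * (c * w) = c * (Y * w) := by rw [← mul_assoc, hcY, mul_assoc]
  have hdX' (w : A) : X * (d * w) = d * (X * w) := by rw [← mul_assoc, hdX, mul_assoc]
  rw [qSerre_eq hp]
  simp only [sub_mul, add_mul, mul_sub, mul_add, smul_mul_assoc, mul_smul_comm, mul_assoc,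
    hX, hY, hX', hY', hcX, hcY, hdX, hcX', hcY', hdX']
  match_scalars <;> field_simp <;> ring

/-- There is an automorphism `s` rescaling the two generators by `p` and `p⁻¹`, and an
`s`-derivation `d` with prescribed scalar values `a`, `b` on them. They are the entries of the
top row of a homomorphism to upper triangular matrices `n ↦ !![s n, d n; 0, n]`. Only their
behaviour under left multiplication by the generators is recorded. -/
lemma exists_skew {p : F} (hp0 : p ≠ 0)
    (hp : (q ^ 3 - q⁻¹ ^ 3) / (q - q⁻¹) = p + 1 + p⁻¹) (a b : F) :
    ∃ s d : UPos F q →ₗ[F] UPos F q, s 1 = 1 ∧ d 1 = 0 ∧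
      (∀ n, s (uposGen F q false * n) = p • (uposGen F q false * s n)) ∧
      (∀ n, s (uposGen F q true * n) = p⁻¹ • (uposGen F q true * s n)) ∧
      (∀ n, d (uposGen F q false * n) = p • (uposGen F q false * d n) + a • n) ∧
      (∀ n, d (uposGen F q true * n) = p⁻¹ • (uposGen F q true * d n) + b • n) := by
  let g : Bool → Matrix (Fin 2) (Fin 2) (UPos F q) := fun t =>
    bif t then !![p⁻¹ • uposGen F q true, b • 1; 0, uposGen F q true]
    else !![p • uposGen F q false, a • 1; 0, uposGen F q false]
  have hg : ∀ t, qSerre q (g t) (g (!t)) = 0 := by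
    intro t
    cases t
    · exact qSerre_mat hp0 hp _ _ (upos_serre false) a b
    · have h := qSerre_mat (inv_ne_zero hp0) (by rw [hp, inv_inv]; ring) _ _
        (upos_serre (F := F) (q := q) true) b a
      rw [inv_inv] at h
      exact h
  let ψ := uposLift g hg
  have hψ : ∀ t, ψ (uposGen F q t) = g t := uposLift_gen g hg
  clear_value ψ
  have h10 : ∀ n, ψ n 1 0 = 0 ∧ ψ n 1 1 = n := by
    intro n
    induction n using upos_induction with
    | halg r => simp [Matrix.algebraMap_matrix_apply]
    | hgen t => cases t <;> simp [hψ, g]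
    | hmul m n hm hn => simp [Matrix.mul_apply, Fin.sum_univ_two, hm, hn]
    | hadd m n hm hn => simp [hm, hn]
  let en (i j : Fin 2) : UPos F q →ₗ[F] UPos F q :=
    (Matrix.entryLinearMap F (UPos F q) i j) ∘ₗ ψ.toLinearMap
  have hen (i j n) : en i j n = ψ n i j := rfl
  refine ⟨en 0 0, en 0 1, ?_, ?_, ?_, ?_, ?_, ?_⟩
  · simp [hen]
  · simp [hen]
  · intro n
    simp [hen, Matrix.mul_apply, Fin.sum_univ_two, h10, hψ, g]
  · intro n
    simp [hen, Matrix.mul_apply, Fin.sum_univ_two, h10, hψ, g]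
  · intro n
    simp [hen, Matrix.mul_apply, Fin.sum_univ_two, h10, hψ, g]
  · intro n
    simp [hen, Matrix.mul_apply, Fin.sum_univ_two, h10, hψ, g]

/-! ### The representation of `□̂_q` on `N ⊗ B` -/

/-- The universal property of `□̂_q`. It suffices that the images of the `c_i` commute with the
images of the generators; centrality in the image and the relations for `c_i⁻¹` follow. -/
lemma exists_boxLift {A : Type*} [Ring A] [Algebra F A] (X C C' : ZMod 4 → A)
    (hCC : ∀ i, C i * C' i = 1) (hCC' : ∀ i, C' i * C i = 1)
    (hCX : ∀ i j, Commute (C i) (X j)) (hC : ∀ i j, Commute (C i) (C j))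
    (hW : ∀ i, (q - q⁻¹)⁻¹ • (q • (X i * X (i + 1)) - q⁻¹ • (X (i + 1) * X i)) = C i)
    (hS : ∀ i, qSerre q (X i) (X (i + 2)) = 0) :
    ∃ Φ : BoxH F q →ₐ[F] A, (∀ i, Φ (xH F q i) = X i) ∧ (∀ i, Φ (cH F q i) = C i) ∧
      ∀ i, Φ (cinvH F q i) = C' i := by
  have hinv {i : ZMod 4} {a : A} (h : Commute (C i) a) : Commute (C' i) a := by
    have h1 : C' i * (C i * a) * C' i = C' i * (a * C i) * C' i := by rw [h.eq]
    rw [← mul_assoc, hCC', one_mul, mul_assoc, mul_assoc, hCC, mul_one] at h1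
    exact h1.symm
  let f : FreeAlgebra F BHGen →ₐ[F] A := FreeAlgebra.lift F (Sum.elim X (Sum.elim C C'))
  have hfx (i) : f (bhx F i) = X i := by simp [f, bhx]
  have hfc (i) : f (bhc F i) = C i := by simp [f, bhc]
  have hfi (i) : f (bhcinv F i) = C' i := by simp [f, bhcinv]
  have hcomm (i) (a) : Commute (C i) (f a) := by
    induction a using FreeAlgebra.induction with
    | grade0 r => rw [AlgHom.commutes]; exact (Algebra.commutes r _).symm
    | grade1 x =>
      rcases x with j | j | j
      · exact hfx j ▸ hCX i j
      · exact hfc j ▸ hC i j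
      · exact hfi j ▸ (hinv (hC j i)).symm
    | mul a b ha hb => rw [map_mul]; exact ha.mul_right hb
    | add a b ha hb => rw [map_add]; exact ha.add_right hb
  refine ⟨RingQuot.liftAlgHom F ⟨f, ?_⟩, ?_, ?_, ?_⟩
  · rintro _ _ (i | i | ⟨i, a⟩ | ⟨i, a⟩ | i | i)
    · simp [hfc, hfi, hCC]
    · simp [hfc, hfi, hCC']
    · rw [map_mul, map_mul, hfc, (hcomm i a).eq]
    · rw [map_mul, map_mul, hfi, (hinv (hcomm i a)).eq]
    · simp only [map_smul, map_sub, map_mul, hfx, hfc, hW]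
    · rw [map_qSerre, hfx, hfx, hS, map_zero]
  · intro i; simp [xH, hfx]
  · intro i; simp [cH, hfc]
  · intro i; simp [cinvH, hfi]

open TensorProduct

/-- An endomorphism of `N ⊗ B` that kills `1 ⊗ B` and commutes, up to scalars, with left
multiplication by the generators of `N` is zero. -/
lemma end_eq_zero_of_skewComm {B : Type*} [Ring B] [Algebra F B]
    (S : Module.End F (UPos F q ⊗[F] B))
    (h1 : ∀ b, S (1 ⊗ₜ b) = 0)
    (hg : ∀ t, ∃ r : F, S * (LinearMap.mulLeft F (uposGen F q t)).rTensor B =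
      r • ((LinearMap.mulLeft F (uposGen F q t)).rTensor B * S)) : S = 0 := by
  have key : ∀ n m : UPos F q, (∀ b, S (m ⊗ₜ b) = 0) → ∀ b, S ((n * m) ⊗ₜ b) = 0 := by
    intro n
    induction n using upos_induction with
    | halg r =>
      intro m hm b
      rw [← Algebra.smul_def, ← TensorProduct.smul_tmul', map_smul, hm, smul_zero]
    | hgen t =>
      intro m hm b
      obtain ⟨r, hr⟩ := hg t
      have := LinearMap.congr_fun hr (m ⊗ₜ b)
      simpa [hm] using this
    | hmul a b ha hb => intro m hm; rw [mul_assoc]; exact ha _ (hb _ hm)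
    | hadd a b ha hb =>
      intro m hm c
      rw [add_mul, TensorProduct.add_tmul, map_add, ha _ hm, hb _ hm, add_zero]
  ext n b
  simpa using key n 1 h1 b

/-- Let `B` be an algebra with elements `y false`, `y true` satisfying the `q`-Serre relations and
central units `γ i`. Then `□̂_q` acts on `N ⊗ B` so that `x₀, x₂` act by left multiplication on `N`,
`c_i` by multiplication by `γ i`, and `x₁, x₃` act on `1 ⊗ B` by left multiplication by the `y`'s.
The action of `x₁, x₃` on all of `N ⊗ B` is forced by the `q`-Weyl relations. -/
lemma exists_rep (hq : q ≠ 0) (hq2 : q ^ 2 ≠ 1) {B : Type*} [Ring B] [Algebra F B]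
    (y : Bool → B) (hy : ∀ t, qSerre q (y t) (y (!t)) = 0) (γ γ' : ZMod 4 → B)
    (hγ : ∀ i, γ i * γ' i = 1) (hγ' : ∀ i, γ' i * γ i = 1) (hcent : ∀ i b, γ i * b = b * γ i) :
    ∃ Φ : BoxH F q →ₐ[F] Module.End F (UPos F q ⊗[F] B),
      (∀ n b, Φ (xH F q 0) (n ⊗ₜ b) = (uposGen F q false * n) ⊗ₜ b) ∧
      (∀ n b, Φ (xH F q 2) (n ⊗ₜ b) = (uposGen F q true * n) ⊗ₜ b) ∧
      (∀ b, Φ (xH F q 1) (1 ⊗ₜ b) = 1 ⊗ₜ (y false * b)) ∧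
      (∀ b, Φ (xH F q 3) (1 ⊗ₜ b) = 1 ⊗ₜ (y true * b)) ∧
      (∀ i n b, Φ (cH F q i) (n ⊗ₜ b) = n ⊗ₜ (γ i * b)) ∧
      (∀ i n b, Φ (cinvH F q i) (n ⊗ₜ b) = n ⊗ₜ (γ' i * b)) := by
  have hp0 : q ^ 2 ≠ 0 := pow_ne_zero _ hq
  have hp := qthree hq hq2
  have hpi : (q ^ 3 - q⁻¹ ^ 3) / (q - q⁻¹) = (q ^ 2)⁻¹ + 1 + ((q ^ 2)⁻¹)⁻¹ := by
    rw [hp, inv_inv]; ring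
  have hqq := sub_inv_ne hq hq2
  -- The constants are the coefficients of `c_i` produced when `x₁` (for `s`, `d`, `d'`) or `x₃`
  -- (for `t`, `e`, `e'`) is moved to the right past `x₀` or `x₂`. The maps `d, d'` are twisted
  -- by the same automorphism `s`, and `e, e'` by `t`.
  obtain ⟨s, d, hs1, hd1, hsu, hsv, hdu, hdv⟩ := exists_skew hp0 hp (1 - q ^ 2) 0
  obtain ⟨_, d', _, hd1', _, _, hdu', hdv'⟩ :=
    exists_skew hp0 hp 0 (1 - (q ^ 2)⁻¹)
  obtain ⟨t, e, ht1, he1, htu, htv, heu, hev⟩ :=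
    exists_skew (inv_ne_zero hp0) hpi (1 - (q ^ 2)⁻¹) 0
  obtain ⟨_, e', _, he1', _, _, heu', hev'⟩ :=
    exists_skew (inv_ne_zero hp0) hpi 0 (1 - q ^ 2)
  let m (b : B) : Module.End F B := LinearMap.mulLeft F b
  let X0 : Module.End F (UPos F q ⊗[F] B) := (LinearMap.mulLeft F (uposGen F q false)).rTensor B
  let X2 : Module.End F (UPos F q ⊗[F] B) := (LinearMap.mulLeft F (uposGen F q true)).rTensor B
  let X1 : Module.End F (UPos F q ⊗[F] B) :=
    TensorProduct.map s (m (y false)) + TensorProduct.map d (m (γ 0)) +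
      TensorProduct.map d' (m (γ 1))
  let X3 : Module.End F (UPos F q ⊗[F] B) :=
    TensorProduct.map t (m (y true)) + TensorProduct.map e (m (γ 3)) +
      TensorProduct.map e' (m (γ 2))
  let C (i : ZMod 4) : Module.End F (UPos F q ⊗[F] B) := (m (γ i)).lTensor (UPos F q)
  let C' (i : ZMod 4) : Module.End F (UPos F q ⊗[F] B) := (m (γ' i)).lTensor (UPos F q)
  have hX0 (n b) : X0 (n ⊗ₜ b) = (uposGen F q false * n) ⊗ₜ b := rfl
  have hX2 (n b) : X2 (n ⊗ₜ b) = (uposGen F q true * n) ⊗ₜ b := rfl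
  have hX1 (n b) : X1 (n ⊗ₜ b) =
    s n ⊗ₜ (y false * b) + d n ⊗ₜ (γ 0 * b) + d' n ⊗ₜ (γ 1 * b) := rfl
  have hX3 (n b) : X3 (n ⊗ₜ b) =
    t n ⊗ₜ (y true * b) + e n ⊗ₜ (γ 3 * b) + e' n ⊗ₜ (γ 2 * b) := rfl
  have hC (i n b) : C i (n ⊗ₜ b) = n ⊗ₜ (γ i * b) := rfl
  have hC' (i n b) : C' i (n ⊗ₜ b) = n ⊗ₜ (γ' i * b) := rfl
  have h02 : qSerre q X0 X2 = 0 ∧ qSerre q X2 X0 = 0 := by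
    let L : UPos F q →ₐ[F] Module.End F (UPos F q ⊗[F] B) :=
      (Module.End.rTensorAlgHom F (UPos F q) B).comp (Algebra.lmul F (UPos F q))
    have h0 : X0 = L (uposGen F q false) := rfl
    have h2 : X2 = L (uposGen F q true) := rfl
    rw [h0, h2, ← map_qSerre, ← map_qSerre]
    exact ⟨(congrArg L (upos_serre false)).trans (map_zero L),
      (congrArg L (upos_serre true)).trans (map_zero L)⟩
  have hX02 : ∀ z, (LinearMap.mulLeft F (uposGen F q z)).rTensor B = bif z then X2 else X0 := by
    rintro (_ | _) <;> rfl
  clear_value X0 X1 X2 X3 C C'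
  -- The four `q`-Weyl relations, as rules moving `X₁`, `X₃` to the right past `X₀`, `X₂`.
  have r10 : X1 * X0 = q ^ 2 • (X0 * X1) + (1 - q ^ 2) • C 0 := by
    ext n b
    simp [hX0, hX1, hC, hsu, hdu, hdu', add_tmul, smul_tmul']
    module
  have r12 : X1 * X2 = (q ^ 2)⁻¹ • (X2 * X1) + (1 - (q ^ 2)⁻¹) • C 1 := by
    ext n b
    simp [hX2, hX1, hC, hsv, hdv, hdv', add_tmul, smul_tmul']
    module
  have r30 : X3 * X0 = (q ^ 2)⁻¹ • (X0 * X3) + (1 - (q ^ 2)⁻¹) • C 3 := by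
    ext n b
    simp [hX0, hX3, hC, htu, heu, heu', add_tmul, smul_tmul']
    module
  have r32 : X3 * X2 = q ^ 2 • (X2 * X3) + (1 - q ^ 2) • C 2 := by
    ext n b
    simp [hX2, hX3, hC, htv, hev, hev', add_tmul, smul_tmul']
    module
  have hγm (i j) (b : B) : γ i * (γ j * b) = γ j * (γ i * b) := by
    rw [← mul_assoc, hcent, mul_assoc]
  have hγy (i z) (b : B) : γ i * (y z * b) = y z * (γ i * b) := by
    rw [← mul_assoc, hcent, mul_assoc]
  have c0 (i) : Commute (C i) X0 := by
    ext n b; simp [hC, hX0]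
  have c2 (i) : Commute (C i) X2 := by
    ext n b; simp [hC, hX2]
  have c1 (i) : Commute (C i) X1 := by
    ext n b; simp [hC, hX1, hγm i, hγy]
  have c3 (i) : Commute (C i) X3 := by
    ext n b; simp [hC, hX3, hγm i, hγy]
  have cc (i j) : Commute (C i) (C j) := by
    ext n b; simp [hC, hγm i]
  have hsm {Y : Module.End F (UPos F q ⊗[F] B)} (r : F) {i} (h : Commute (C i) Y) :
      Y * (r • C i) = (r • C i) * Y := by
    rw [mul_smul_comm, smul_mul_assoc, h.eq]
  have h11 (b) : X1 (1 ⊗ₜ b) = 1 ⊗ₜ (y false * b) := by simp [hX1, hs1, hd1, hd1']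
  have h31 (b) : X3 (1 ⊗ₜ b) = 1 ⊗ₜ (y true * b) := by simp [hX3, ht1, he1, he1']
  -- The Serre expressions in `X₁, X₃` kill `1 ⊗ B` and skew-commute with `X₀` and `X₂`.
  have h13 : qSerre q X1 X3 = 0 := by
    apply end_eq_zero_of_skewComm
    · intro b
      have h := congrArg (fun z => (1 : UPos F q) ⊗ₜ[F] (z * b)) (hy false)
      simpa [qSerre_eq hp, h11, h31, add_mul, sub_mul, mul_assoc, tmul_add, tmul_sub] using h
    · intro z
      rw [hX02]
      cases z
      · exact ⟨_, qSerre_comm hp0 hp r10 r30 (hsm _ (c1 _)) (hsm _ (c3 _)) (hsm _ (c1 _))⟩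
      · exact ⟨_, qSerre_comm (inv_ne_zero hp0) hpi r12 (by rw [inv_inv]; exact r32)
          (hsm _ (c1 _)) (hsm _ (c3 _)) (hsm _ (c1 _))⟩
  have h31' : qSerre q X3 X1 = 0 := by
    apply end_eq_zero_of_skewComm
    · intro b
      have h := congrArg (fun z => (1 : UPos F q) ⊗ₜ[F] (z * b)) (hy true)
      simpa [qSerre_eq hp, h11, h31, add_mul, sub_mul, mul_assoc, tmul_add, tmul_sub] using h
    · intro z
      rw [hX02]
      cases z
      · exact ⟨_, qSerre_comm (inv_ne_zero hp0) hpi r30 (by rw [inv_inv]; exact r10)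
          (hsm _ (c3 _)) (hsm _ (c1 _)) (hsm _ (c3 _))⟩
      · exact ⟨_, qSerre_comm hp0 hp r32 r12 (hsm _ (c3 _)) (hsm _ (c1 _)) (hsm _ (c3 _))⟩
  let X : ZMod 4 → Module.End F (UPos F q ⊗[F] B) := ![X0, X1, X2, X3]
  obtain ⟨Φ, hΦx, hΦc, hΦi⟩ := exists_boxLift (q := q) X C C'
    (fun i => by ext n b; simp [hC, hC', ← mul_assoc, hγ])
    (fun i => by ext n b; simp [hC, hC', ← mul_assoc, hγ'])
    (by
      intro i j
      fin_cases j
      exacts [c0 i, c1 i, c2 i, c3 i])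
    cc
    (by
      have key (c : Module.End F (UPos F q ⊗[F] B)) {Y} (h : Y = (q - q⁻¹) • c) :
          (q - q⁻¹)⁻¹ • Y = c := by
        rw [h, smul_smul, inv_mul_cancel₀ hqq, one_smul]
      intro i
      apply key
      fin_cases i
      · change q • (X0 * X1) - q⁻¹ • (X1 * X0) = (q - q⁻¹) • C 0
        rw [r10]
        match_scalars <;> field_simp <;> ring
      · change q • (X1 * X2) - q⁻¹ • (X2 * X1) = (q - q⁻¹) • C 1
        rw [r12]
        match_scalars <;> field_simp <;> ring
      · change q • (X2 * X3) - q⁻¹ • (X3 * X2) = (q - q⁻¹) • C 2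
        rw [r32]
        match_scalars <;> field_simp <;> ring
      · change q • (X3 * X0) - q⁻¹ • (X0 * X3) = (q - q⁻¹) • C 3
        rw [r30]
        match_scalars <;> field_simp <;> ring)
    (by
      intro i
      fin_cases i
      exacts [h02.1, h13, h02.2, h31'])
  refine ⟨Φ, ?_, ?_, ?_, ?_, ?_, ?_⟩
  · intro n b; rw [hΦx]; exact hX0 n b
  · intro n b; rw [hΦx]; exact hX2 n b
  · intro b; rw [hΦx]; exact h11 b
  · intro b; rw [hΦx]; exact h31 b
  · intro i n b; rw [hΦc, hC]
  · intro i n b; rw [hΦi, hC']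

lemma uposLift_range {A : Type*} [Ring A] [Algebra F A] (g : Bool → A)
    (hg : ∀ b, qSerre q (g b) (g (!b)) = 0) :
    (uposLift g hg).range = Algebra.adjoin F {g false, g true} := by
  apply le_antisymm
  · rintro _ ⟨n, rfl⟩
    change uposLift g hg n ∈ _
    induction n using upos_induction with
    | halg r => rw [AlgHom.commutes]; exact Subalgebra.algebraMap_mem _ r
    | hgen b =>
      rw [uposLift_gen]
      apply Algebra.subset_adjoin
      cases b <;> simp
    | hmul m n hm hn => rw [map_mul]; exact mul_mem hm hn
    | hadd m n hm hn => rw [map_add]; exact add_mem hm hn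
  · apply Algebra.adjoin_le
    rintro _ (rfl | rfl)
    exacts [⟨_, uposLift_gen g hg false⟩, ⟨_, uposLift_gen g hg true⟩]

/-! ### The Laurent polynomial algebra -/

/-- The Laurent polynomial algebra in four variables indexed by `ℤ/4ℤ`, as a group algebra. -/
abbrev Laurent (F : Type*) [Field F] := AddMonoidAlgebra F (ZMod 4 →₀ ℤ)

/-- The variable `λ_i` -/
def lam (F : Type*) [Field F] (i : ZMod 4) : Laurent F :=
  AddMonoidAlgebra.single (Finsupp.single i 1) 1

/-- The inverse `λ_i⁻¹` of the variable `λ_i`. -/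
def lamInv (F : Type*) [Field F] (i : ZMod 4) : Laurent F :=
  AddMonoidAlgebra.single (Finsupp.single i (-1)) 1

lemma lam_mul_lamInv (i : ZMod 4) : lam F i * lamInv F i = 1 := by
  rw [lam, lamInv, AddMonoidAlgebra.single_mul_single, ← Finsupp.single_add]
  simp [AddMonoidAlgebra.one_def]

lemma laurent_adjoin :
    Algebra.adjoin F (Set.range (lam F) ∪ Set.range (lamInv F)) = ⊤ := by
  rw [eq_top_iff]
  rintro x -
  induction x using AddMonoidAlgebra.induction_on with
  | of g =>
    induction g using Finsupp.induction_linear with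
    | zero => exact one_mem _
    | add f g hf hg =>
      simp only [ofAdd_add, map_mul]
      exact mul_mem hf hg
    | single i n =>
      have hpos : lam F i ∈ Algebra.adjoin F (Set.range (lam F) ∪ Set.range (lamInv F)) :=
        Algebra.subset_adjoin (Or.inl ⟨i, rfl⟩)
      have hneg : lamInv F i ∈ Algebra.adjoin F (Set.range (lam F) ∪ Set.range (lamInv F)) :=
        Algebra.subset_adjoin (Or.inr ⟨i, rfl⟩)
      obtain ⟨k, rfl | rfl⟩ := n.eq_nat_or_neg
      · convert pow_mem hpos k using 1
        simp [lam, AddMonoidAlgebra.single_pow]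
      · convert pow_mem hneg k using 1
        simp [lamInv, AddMonoidAlgebra.single_pow]
  | add f g hf hg => exact add_mem hf hg
  | smul r f hf => exact Subalgebra.smul_mem _ hf r

lemma exists_laurentLift {A : Type*} [Ring A] [Algebra F A] (C C' : ZMod 4 → A)
    (hCC : ∀ i, C i * C' i = 1) (hCC' : ∀ i, C' i * C i = 1)
    (hC : ∀ i a, a * C i = C i * a) :
    ∃ h : Laurent F →ₐ[F] A, (∀ i, h (lam F i) = C i) ∧ ∀ i, h (lamInv F i) = C' i := by
  have hC' (i a) : a * C' i = C' i * a := by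
    have h1 : C' i * (C i * a) * C' i = C' i * (a * C i) * C' i := by rw [hC]
    rw [← mul_assoc, hCC', one_mul, mul_assoc, mul_assoc, hCC, mul_one] at h1
    exact h1
  let u (i : ZMod 4) : (Subalgebra.center F A)ˣ :=
    ⟨⟨C i, Subalgebra.mem_center_iff.2 (hC i)⟩, ⟨C' i, Subalgebra.mem_center_iff.2 (hC' i)⟩,
      Subtype.ext (hCC i), Subtype.ext (hCC' i)⟩
  let φ : Multiplicative (ZMod 4 →₀ ℤ) →* (Subalgebra.center F A)ˣ :=
    { toFun := fun g => ∏ i, u i ^ (g.toAdd i)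
      map_one' := by simp
      map_mul' := fun g g' => by simp [zpow_add, Finset.prod_mul_distrib] }
  have hφ (i n) : φ (Multiplicative.ofAdd (Finsupp.single i n)) = u i ^ n := by
    change ∏ j, u j ^ (Finsupp.single i n j) = _
    rw [Finset.prod_eq_single i]
    · simp
    · intro j _ hj; simp [Finsupp.single_eq_of_ne hj]
    · simp
  refine ⟨(Subalgebra.val _).comp (AddMonoidAlgebra.lift F _ _ ((Units.coeHom _).comp φ)), ?_, ?_⟩
  · intro i
    simp [lam, AddMonoidAlgebra.lift_single, hφ, u]
  · intro i
    simp [lamInv, AddMonoidAlgebra.lift_single, hφ, u]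

/-! ### Relations in `□̂_q` and straightening -/

lemma cH_mul_cinvH (i : ZMod 4) : cH F q i * cinvH F q i = 1 := by
  have h := RingQuot.mkAlgHom_rel F (BoxHRel.c_cinv (F := F) (q := q) i)
  rwa [map_mul, map_one] at h

lemma cinvH_mul_cH (i : ZMod 4) : cinvH F q i * cH F q i = 1 := by
  have h := RingQuot.mkAlgHom_rel F (BoxHRel.cinv_c (F := F) (q := q) i)
  rwa [map_mul, map_one] at h

lemma cH_central (i : ZMod 4) (a : BoxH F q) : a * cH F q i = cH F q i * a := by
  obtain ⟨a, rfl⟩ := RingQuot.mkAlgHom_surjective F (BoxHRel F q) a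
  have h := RingQuot.mkAlgHom_rel F (BoxHRel.central_c (F := F) (q := q) i a)
  rw [map_mul, map_mul] at h
  exact h.symm

lemma cinvH_central (i : ZMod 4) (a : BoxH F q) : a * cinvH F q i = cinvH F q i * a := by
  obtain ⟨a, rfl⟩ := RingQuot.mkAlgHom_surjective F (BoxHRel F q) a
  have h := RingQuot.mkAlgHom_rel F (BoxHRel.central_cinv (F := F) (q := q) i a)
  rw [map_mul, map_mul] at h
  exact h.symm

lemma xH_serre (i : ZMod 4) : qSerre q (xH F q i) (xH F q (i + 2)) = 0 := by
  have h := RingQuot.mkAlgHom_rel F (BoxHRel.serre (F := F) (q := q) i)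
  rw [map_qSerre, map_zero] at h
  exact h

lemma xH_weyl (hq : q ≠ 0) (hq2 : q ^ 2 ≠ 1) (i : ZMod 4) :
    q • (xH F q i * xH F q (i + 1)) - q⁻¹ • (xH F q (i + 1) * xH F q i) =
      (q - q⁻¹) • cH F q i := by
  have h := RingQuot.mkAlgHom_rel F (BoxHRel.weyl (F := F) (q := q) i)
  simp only [map_smul, map_sub, map_mul] at h
  change _ = cH F q i at h
  rw [← h, smul_smul, mul_inv_cancel₀ (sub_inv_ne hq hq2), one_smul]
  rfl

lemma xH_weyl_up (hq : q ≠ 0) (hq2 : q ^ 2 ≠ 1) (i : ZMod 4) :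
    ∃ α β : F, xH F q i * xH F q (i + 1) = α • (xH F q (i + 1) * xH F q i) + β • cH F q i := by
  refine ⟨(q ^ 2)⁻¹, q⁻¹ * (q - q⁻¹), ?_⟩
  rw [mul_smul, ← xH_weyl hq hq2]
  match_scalars <;> field_simp <;> ring

lemma xH_weyl_down (hq : q ≠ 0) (hq2 : q ^ 2 ≠ 1) (i : ZMod 4) :
    ∃ α β : F, xH F q (i + 1) * xH F q i = α • (xH F q i * xH F q (i + 1)) + β • cH F q i := by
  refine ⟨q ^ 2, - q * (q - q⁻¹), ?_⟩
  rw [mul_smul, ← xH_weyl hq hq2]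
  match_scalars <;> field_simp <;> ring

variable (F q) in
/-- The subalgebra `□̂_q^even` generated by `x₀, x₂`. -/
abbrev evenH : Subalgebra F (BoxH F q) := Algebra.adjoin F {xH F q 0, xH F q 2}

variable (F q) in
/-- The subalgebra `□̂_q^odd` generated by `x₁, x₃`. -/
abbrev oddH : Subalgebra F (BoxH F q) := Algebra.adjoin F {xH F q 1, xH F q 3}

variable (F q) in
/-- The subalgebra `Ĉ` generated by the `c_i` and `c_i⁻¹`. -/
abbrev centH : Subalgebra F (BoxH F q) :=
  Algebra.adjoin F (Set.range (cH F q) ∪ Set.range (cinvH F q))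

lemma centH_comm {c : BoxH F q} (hc : c ∈ centH F q) (a : BoxH F q) : a * c = c * a := by
  have h : centH F q ≤ Subalgebra.center F (BoxH F q) := by
    apply Algebra.adjoin_le
    rintro _ (⟨i, rfl⟩ | ⟨i, rfl⟩)
    exacts [Subalgebra.mem_center_iff.2 (cH_central i), Subalgebra.mem_center_iff.2 (cinvH_central i)]
  exact Subalgebra.mem_center_iff.1 (h hc) a

/-- The span of the products `e * o * c` is a left ideal containing `1`: a `q`-Weyl relation moves
an odd generator to the right past each even generator at the cost of a central term. -/
lemma mulMap3_surjective (hq : q ≠ 0) (hq2 : q ^ 2 ≠ 1) :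
    Function.Surjective (mulMap3 (Subalgebra.toSubmodule (evenH F q))
      (Subalgebra.toSubmodule (oddH F q)) (Subalgebra.toSubmodule (centH F q))) := by
  let Q : Submodule F (BoxH F q) := Submodule.span F
    {a | ∃ e ∈ evenH F q, ∃ o ∈ oddH F q, ∃ c ∈ centH F q, a = e * o * c}
  have hQ {e o c : BoxH F q} (he : e ∈ evenH F q) (ho : o ∈ oddH F q) (hc : c ∈ centH F q) :
      e * o * c ∈ Q := Submodule.subset_span ⟨e, he, o, ho, c, hc, rfl⟩
  have hlin (T : BoxH F q →ₗ[F] BoxH F q)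
      (hT : ∀ e ∈ evenH F q, ∀ o ∈ oddH F q, ∀ c ∈ centH F q, T (e * o * c) ∈ Q) :
      ∀ z ∈ Q, T z ∈ Q := by
    intro z hz
    have : Q ≤ Q.comap T := by
      apply Submodule.span_le.2
      rintro _ ⟨e, he, o, ho, c, hc, rfl⟩
      exact hT e he o ho c hc
    exact this hz
  have hEl {e' z : BoxH F q} (he' : e' ∈ evenH F q) (hz : z ∈ Q) : e' * z ∈ Q := by
    refine hlin (LinearMap.mulLeft F e') (fun e he o ho c hc => ?_) z hz
    have := hQ (mul_mem he' he) ho hc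
    simpa only [LinearMap.mulLeft_apply, mul_assoc] using this
  have hCr {c' z : BoxH F q} (hc' : c' ∈ centH F q) (hz : z ∈ Q) : z * c' ∈ Q := by
    refine hlin (LinearMap.mulRight F c') (fun e he o ho c hc => ?_) z hz
    have := hQ he ho (mul_mem hc hc')
    simpa only [LinearMap.mulRight_apply, mul_assoc] using this
  have hOr {o' z : BoxH F q} (ho' : o' ∈ oddH F q) (hz : z ∈ Q) : z * o' ∈ Q := by
    refine hlin (LinearMap.mulRight F o') (fun e he o ho c hc => ?_) z hz
    have := hQ he (mul_mem ho ho') hc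
    rw [LinearMap.mulRight_apply, mul_assoc, ← centH_comm hc]
    simpa only [mul_assoc] using this
  have hcQ (i) {z : BoxH F q} (hz : z ∈ Q) : cH F q i * z ∈ Q := by
    rw [← cH_central]
    exact hCr (Algebra.subset_adjoin (Or.inl ⟨i, rfl⟩)) hz
  -- Moving an odd element `X` to the right through the even subalgebra. The auxiliary factor `m`
  -- makes the statement `X * (e * m) ∈ Q` multiplicative in `e`.
  have hmove {X : BoxH F q} (hX : X ∈ oddH F q)
      (h0 : ∃ (i : ZMod 4) (α β : F), X * xH F q 0 = α • (xH F q 0 * X) + β • cH F q i)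
      (h2 : ∃ (i : ZMod 4) (α β : F), X * xH F q 2 = α • (xH F q 2 * X) + β • cH F q i)
      {z : BoxH F q} (hz : z ∈ Q) : X * z ∈ Q := by
    have hstep {w : BoxH F q} (hw : w ∈ evenH F q)
        (h : ∃ (i : ZMod 4) (α β : F), X * w = α • (w * X) + β • cH F q i)
        {m : BoxH F q} (hm : m ∈ evenH F q) (hXm : X * m ∈ Q) : X * (w * m) ∈ Q := by
      obtain ⟨i, α, β, h⟩ := h
      rw [← mul_assoc, h, add_mul, smul_mul_assoc, smul_mul_assoc, mul_assoc]
      refine add_mem (Q.smul_mem _ (hEl hw hXm)) (Q.smul_mem _ (hcQ i ?_))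
      simpa using hQ hm (one_mem _) (one_mem _)
    have hXe {e : BoxH F q} (he : e ∈ evenH F q) :
        ∀ m ∈ evenH F q, X * m ∈ Q → X * (e * m) ∈ Q := by
      induction he using Algebra.adjoin_induction with
      | mem w hw =>
        intro m hm hXm
        rcases hw with rfl | rfl
        · exact hstep (Algebra.subset_adjoin (by simp)) h0 hm hXm
        · exact hstep (Algebra.subset_adjoin (by simp)) h2 hm hXm
      | algebraMap r =>
        intro m hm hXm
        rw [← Algebra.smul_def, mul_smul_comm]
        exact Q.smul_mem _ hXm
      | add a b _ _ ha hb =>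
        intro m hm hXm
        rw [add_mul, mul_add]
        exact add_mem (ha m hm hXm) (hb m hm hXm)
      | mul a b _ hb' ha hb =>
        intro m hm hXm
        rw [mul_assoc]
        exact ha _ (mul_mem hb' hm) (hb m hm hXm)
    refine hlin (LinearMap.mulLeft F X) (fun e he o ho c hc => ?_) z hz
    have h1 := hXe he 1 (one_mem _) (by simpa using hQ (one_mem _) hX (one_mem _))
    rw [mul_one] at h1
    simpa only [LinearMap.mulLeft_apply, mul_assoc] using hCr hc (hOr ho h1)
  have htop (a : BoxH F q) : ∀ z ∈ Q, a * z ∈ Q := by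
    obtain ⟨a, rfl⟩ := RingQuot.mkAlgHom_surjective F (BoxHRel F q) a
    induction a using FreeAlgebra.induction with
    | grade0 r =>
      intro z hz
      rw [AlgHom.commutes, ← Algebra.smul_def]
      exact Q.smul_mem _ hz
    | grade1 g =>
      intro z hz
      rcases g with i | i | i
      · change xH F q i * z ∈ Q
        fin_cases i
        · exact hEl (Algebra.subset_adjoin (Or.inl rfl)) hz
        · exact hmove (X := xH F q 1) (Algebra.subset_adjoin (by simp))
            ⟨0, xH_weyl_down hq hq2 0⟩ ⟨1, xH_weyl_up hq hq2 1⟩ hz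
        · exact hEl (Algebra.subset_adjoin (Or.inr rfl)) hz
        · exact hmove (X := xH F q 3) (Algebra.subset_adjoin (by simp))
            ⟨3, xH_weyl_up hq hq2 3⟩ ⟨2, xH_weyl_down hq hq2 2⟩ hz
      · exact hcQ i hz
      · change cinvH F q i * z ∈ Q
        rw [← cinvH_central]
        exact hCr (Algebra.subset_adjoin (Or.inr ⟨i, rfl⟩)) hz
    | mul a b ha hb => intro z hz; rw [map_mul, mul_assoc]; exact ha _ (hb z hz)
    | add a b ha hb => intro z hz; rw [map_add, add_mul]; exact add_mem (ha z hz) (hb z hz)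
  have hle : Q ≤ LinearMap.range (mulMap3 (Subalgebra.toSubmodule (evenH F q))
      (Subalgebra.toSubmodule (oddH F q)) (Subalgebra.toSubmodule (centH F q))) := by
    apply Submodule.span_le.2
    rintro _ ⟨e, he, o, ho, c, hc, rfl⟩
    exact ⟨(⟨e, he⟩ ⊗ₜ ⟨o, ho⟩) ⊗ₜ ⟨c, hc⟩, by simp [mulMap3]⟩
  intro a
  have h1 : (1 : BoxH F q) ∈ Q := by simpa using hQ (one_mem _) (one_mem _) (one_mem _)
  have := htop a 1 h1
  rw [mul_one] at this
  exact hle this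

/-! ### The left inverse and the two isomorphisms -/

/-- The homomorphisms `f, g, h` parametrize the even, odd and central subalgebras, and `Ψ` is a left
inverse of `n ⊗ m ⊗ l ↦ f n * g m * h l`, obtained by applying the representation on
`N ⊗ (N ⊗ L)` to the vector `1 ⊗ 1`. -/
lemma exists_leftInverse (hq : q ≠ 0) (hq2 : q ^ 2 ≠ 1) :
    ∃ (f g : UPos F q →ₐ[F] BoxH F q) (h : Laurent F →ₐ[F] BoxH F q)
      (Ψ : BoxH F q →ₗ[F] UPos F q ⊗[F] (UPos F q ⊗[F] Laurent F)),
      f.range = evenH F q ∧ g.range = oddH F q ∧ h.range = centH F q ∧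
      (∀ i, h (lam F i) = cH F q i) ∧ (∀ i, h (lamInv F i) = cinvH F q i) ∧
      ∀ n m l, Ψ (f n * g m * h l) = n ⊗ₜ (m ⊗ₜ l) := by
  have hf : ∀ b, qSerre q ((fun b => bif b then xH F q 2 else xH F q 0) b)
      ((fun b => bif b then xH F q 2 else xH F q 0) (!b)) = 0 := by
    rintro (_ | _)
    exacts [xH_serre 0, xH_serre 2]
  have hg : ∀ b, qSerre q ((fun b => bif b then xH F q 3 else xH F q 1) b)
      ((fun b => bif b then xH F q 3 else xH F q 1) (!b)) = 0 := by
    rintro (_ | _)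
    exacts [xH_serre 1, xH_serre 3]
  let f : UPos F q →ₐ[F] BoxH F q := uposLift _ hf
  let g : UPos F q →ₐ[F] BoxH F q := uposLift _ hg
  have hfg (t) : f (uposGen F q t) = bif t then xH F q 2 else xH F q 0 := uposLift_gen _ hf t
  have hgg (t) : g (uposGen F q t) = bif t then xH F q 3 else xH F q 1 := uposLift_gen _ hg t
  have hfr : f.range = evenH F q := uposLift_range _ hf
  have hgr : g.range = oddH F q := uposLift_range _ hg
  clear_value f g
  obtain ⟨h, hh, hh'⟩ := exists_laurentLift (F := F) (cH F q) (cinvH F q) cH_mul_cinvH cinvH_mul_cH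
    cH_central
  have hhr : h.range = centH F q := by
    rw [← Algebra.map_top, ← laurent_adjoin, AlgHom.map_adjoin, Set.image_union,
      ← Set.range_comp, ← Set.range_comp]
    have e1 : h ∘ lam F = cH F q := funext hh
    have e2 : h ∘ lamInv F = cinvH F q := funext hh'
    rw [e1, e2]
  let ιN : UPos F q →ₐ[F] UPos F q ⊗[F] Laurent F := Algebra.TensorProduct.includeLeft
  obtain ⟨Φ, Φ0, Φ2, Φ1, Φ3, Φc, Φi⟩ := exists_rep hq hq2
    (fun t => ιN (uposGen F q t)) (fun t => by rw [← map_qSerre, upos_serre, map_zero])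
    (fun i => (1 : UPos F q) ⊗ₜ[F] lam F i) (fun i => (1 : UPos F q) ⊗ₜ[F] lamInv F i)
    (fun i => by simp [lam_mul_lamInv, Algebra.TensorProduct.one_def])
    (fun i => by
      simp [mul_comm (lamInv F i), lam_mul_lamInv, Algebra.TensorProduct.one_def])
    (fun i b => by
      induction b with
      | zero => simp
      | tmul n l => simp [mul_comm]
      | add a b ha hb => rw [mul_add, add_mul, ha, hb])
  have Φf (n m : UPos F q) : ∀ b, Φ (f n) (m ⊗ₜ b) = (n * m) ⊗ₜ b := by
    induction n using upos_induction generalizing m with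
    | halg r => intro b; simp [Module.algebraMap_end_apply, smul_tmul', ← Algebra.smul_def]
    | hgen t =>
      intro b
      rw [hfg]
      cases t
      exacts [Φ0 m b, Φ2 m b]
    | hmul n n' hn hn' => intro b; simp [hn, hn', mul_assoc]
    | hadd n n' hn hn' => intro b; simp [hn, hn', add_mul, add_tmul]
  have Φg (n : UPos F q) : ∀ b, Φ (g n) (1 ⊗ₜ b) = 1 ⊗ₜ (ιN n * b) := by
    induction n using upos_induction with
    | halg r =>
      intro b
      rw [AlgHom.commutes, AlgHom.commutes, AlgHom.commutes, Module.algebraMap_end_apply,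
        ← Algebra.smul_def, tmul_smul]
    | hgen t =>
      intro b
      rw [hgg]
      cases t
      exacts [Φ1 b, Φ3 b]
    | hmul n n' hn hn' => intro b; simp [hn, hn', mul_assoc]
    | hadd n n' hn hn' => intro b; simp [hn, hn', add_mul, tmul_add]
  have Φh (l : Laurent F) : ∀ n b, Φ (h l) (n ⊗ₜ b) = n ⊗ₜ ((1 ⊗ₜ l) * b) := by
    have hl : l ∈ Algebra.adjoin F (Set.range (lam F) ∪ Set.range (lamInv F)) := by
      rw [laurent_adjoin]; trivial
    induction hl using Algebra.adjoin_induction with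
    | mem l hl =>
      intro n b
      rcases hl with ⟨i, rfl⟩ | ⟨i, rfl⟩
      · rw [hh, Φc]
      · rw [hh', Φi]
    | algebraMap r =>
      intro n b
      rw [AlgHom.commutes, AlgHom.commutes, Module.algebraMap_end_apply,
        Algebra.algebraMap_eq_smul_one, tmul_smul, ← Algebra.TensorProduct.one_def,
        smul_mul_assoc, one_mul, tmul_smul]
    | add a b _ _ ha hb => intro n z; simp [ha, hb, add_mul, tmul_add]
    | mul a b _ _ ha hb =>
      intro n z
      rw [map_mul, map_mul, Module.End.mul_apply, hb, ha, ← mul_assoc,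
        Algebra.TensorProduct.tmul_mul_tmul, one_mul]
  refine ⟨f, g, h, (LinearMap.applyₗ (1 ⊗ₜ 1)) ∘ₗ Φ.toLinearMap, hfr, hgr, hhr, hh, hh', ?_⟩
  intro n m l
  simp [Φh, Φg, Φf, ιN]

lemma exists_laurentEquiv (hq : q ≠ 0) (hq2 : q ^ 2 ≠ 1) :
    ∃ e : Laurent F ≃ₐ[F] centH F q,
      ∀ i, (e (lam F i) : BoxH F q) = cH F q i ∧ (e (lamInv F i) : BoxH F q) = cinvH F q i := by
  obtain ⟨f, g, h, Ψ, -, -, hh, hlam, hlamInv, hΨ⟩ := exists_leftInverse hq hq2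
  -- The augmentation `UPos → F` recovers `l` from `1 ⊗ (1 ⊗ l)`.
  let ε : UPos F q →ₐ[F] F := uposLift (fun _ => 0) (by simp [qSerre])
  have hε {M : Type _} [AddCommGroup M] [Module F M] (m m' : M)
      (hm : (1 : UPos F q) ⊗ₜ[F] m = (1 : UPos F q) ⊗ₜ[F] m') : m = m' := by
    have := congrArg (fun z => TensorProduct.lid F M (ε.toLinearMap.rTensor M z)) hm
    simpa using this
  have hinj : Function.Injective h := by
    intro l l' hl
    have h1 := hΨ 1 1 l
    rw [hl, hΨ 1 1 l'] at h1
    exact (hε _ _ (hε _ _ h1)).symm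
  refine ⟨(AlgEquiv.ofInjective h hinj).trans (Subalgebra.equivOfEq _ _ hh), ?_⟩
  intro i
  exact ⟨hlam i, hlamInv i⟩

/-- Since `f, g, h` are onto the three subalgebras, it is enough that the multiplication map becomes
injective after composition with `f ⊗ g ⊗ h`, and there `Ψ` is a left inverse. -/
lemma mulMap3_injective (hq : q ≠ 0) (hq2 : q ^ 2 ≠ 1) :
    Function.Injective (mulMap3 (Subalgebra.toSubmodule (evenH F q))
      (Subalgebra.toSubmodule (oddH F q)) (Subalgebra.toSubmodule (centH F q))) := by
  obtain ⟨f, g, h, Ψ, hf, hg, hh, -, -, hΨ⟩ := exists_leftInverse hq hq2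
  have hfm (n) : f.toLinearMap n ∈ Subalgebra.toSubmodule (evenH F q) := hf ▸ ⟨n, rfl⟩
  have hgm (n) : g.toLinearMap n ∈ Subalgebra.toSubmodule (oddH F q) := hg ▸ ⟨n, rfl⟩
  have hhm (n) : h.toLinearMap n ∈ Subalgebra.toSubmodule (centH F q) := hh ▸ ⟨n, rfl⟩
  let P := TensorProduct.map
    (TensorProduct.map (f.toLinearMap.codRestrict _ hfm) (g.toLinearMap.codRestrict _ hgm))
    (h.toLinearMap.codRestrict _ hhm)
  have hP : Function.Surjective P := by
    refine TensorProduct.map_surjective (TensorProduct.map_surjective ?_ ?_) ?_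
    · rintro ⟨a, ha⟩
      obtain ⟨n, rfl⟩ : a ∈ f.range := hf ▸ ha
      exact ⟨n, rfl⟩
    · rintro ⟨a, ha⟩
      obtain ⟨n, rfl⟩ : a ∈ g.range := hg ▸ ha
      exact ⟨n, rfl⟩
    · rintro ⟨a, ha⟩
      obtain ⟨n, rfl⟩ : a ∈ h.range := hh ▸ ha
      exact ⟨n, rfl⟩
  have hcomp : Ψ ∘ₗ mulMap3 _ _ _ ∘ₗ P =
      (TensorProduct.assoc F (UPos F q) (UPos F q) (Laurent F)).toLinearMap := by
    apply TensorProduct.ext_threefold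
    intro n m l
    exact hΨ n m l
  have hinj : Function.Injective (mulMap3 _ _ _ ∘ P) := by
    apply Function.Injective.of_comp (f := Ψ)
    have : (Ψ ∘ (mulMap3 _ _ _ ∘ P)) =
        TensorProduct.assoc F (UPos F q) (UPos F q) (Laurent F) :=
      funext fun z => LinearMap.congr_fun hcomp z
    rw [this]
    exact (TensorProduct.assoc F (UPos F q) (UPos F q) (Laurent F)).injective
  exact hinj.of_comp_right hP

end general

/-- Proposition 9.25(iii),(iv): the subalgebra `Ĉ` of `□̂_q` is isomorphic to the Laurent
polynomial algebra in four variables, and the multiplication map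
`□̂_q^even ⊗ □̂_q^odd ⊗ Ĉ → □̂_q` is a linear isomorphism. -/
theorem stmt15 (F : Type*) [Field F] (q : F) (hq : q ≠ 0) (hq2 : q ^ 2 ≠ 1) :
    (∃ e : AddMonoidAlgebra F (ZMod 4 →₀ ℤ) ≃ₐ[F]
        (Algebra.adjoin F (Set.range (cH F q) ∪ Set.range (cinvH F q)) :
          Subalgebra F (BoxH F q)),
      ∀ i : ZMod 4,
        (e (AddMonoidAlgebra.single (Finsupp.single i 1) 1) : BoxH F q) = cH F q i ∧
        (e (AddMonoidAlgebra.single (Finsupp.single i (-1)) 1) : BoxH F q) = cinvH F q i) ∧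
    Function.Bijective
      (mulMap3
        (Subalgebra.toSubmodule (Algebra.adjoin F {xH F q 0, xH F q 2}))
        (Subalgebra.toSubmodule (Algebra.adjoin F {xH F q 1, xH F q 3}))
        (Subalgebra.toSubmodule
          (Algebra.adjoin F (Set.range (cH F q) ∪ Set.range (cinvH F q))))) := by
  exact ⟨exists_laurentEquiv hq hq2, mulMap3_injective hq hq2, mulMap3_surjective hq hq2⟩
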